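/- arXiv:0708.4400 — 2 statements merged into one kernel-verified Lean document; each statement's English description precedes it below -/
import Mathlib

section
/- (a) For every n with 0 ≤ n ≤ k-2, s_{n+1} = s_n · D_n · a_{n+2}. (b) For every n ≥ k-1, s_{n+1} · D_{n-k+1} = s_n · D_n; consequently |D_n| - |D_{n-k+1}| = |s_{n+1}| - |s_n| for n ≥ k-1. -/
/-!
Let `E n` be the full product `s_{n-1}^{d_n} ⋯ s_1^{d_2} s_0^{d_1}`. Peeling one copy of `s_n` off
the leading power of `E (n + 1)` gives `s_n D_n = E (n + 1)` (`s_append_D`), since `d_{n+1} ≥ 1`.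

Both parts then compare `E (n + 1)` with the recursion for `s_{n+1}`, whose leading `k - 1` powers
form the word `head k a d (n + 1)`:
* for `n ≤ k - 2` that word is `E (n + 1)` followed by powers with exponent `d 0 = 0`, and the
  last factor of `s_{n+1}` is the letter `a (n + 2)`;
* for `n ≥ k - 1` that word consists of the first `k - 1` powers of `E (n + 1)`; the remaining ones
  form `E (n + 2 - k)`, which is `s_{n+1-k} D_{n+1-k}` by the same identity.
-/

namespace Epi

variable {α : Type*}

/-- `pw w p` is the `p`-fold concatenation `w^p`. -/
def pw (w : List α) : ℕ → List α
  | 0 => []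
  | p + 1 => w ++ pw w p

/-- `S k a d m` is the word `s_{m-(k-1)}` of the paper (shifted indexing: `m : ℕ`
ranges over the indices `n ≥ 1-k`). -/
def S (k : ℕ) (a : ℕ → α) (d : ℕ → ℕ) : ℕ → List α
  | m =>
    if h : m < max k 1 then [a ((m + 1) % k + 1)]
    else
      ((List.range (k - 1)).map
          (fun j => pw (S k a d (m - 1 - j)) (d (m + 1 - k - j)))).flatten ++
        S k a d (m - max k 1)
  termination_by m => m
  decreasing_by all_goals omega

/-- `s k a d n` is the word `s_n`, for `n ≥ 0`. -/
def s (k : ℕ) (a : ℕ → α) (d : ℕ → ℕ) (n : ℕ) : List α :=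
  S k a d (n + (k - 1))

/-- `D k a d n` is the word `D_n = s_n^{d_{n+1}-1} s_{n-1}^{d_n} ⋯ s_1^{d_2} s_0^{d_1}`. -/
def D (k : ℕ) (a : ℕ → α) (d : ℕ → ℕ) (n : ℕ) : List α :=
  pw (s k a d n) (d (n + 1) - 1) ++
    ((List.range n).map (fun j => pw (s k a d (n - 1 - j)) (d (n - j)))).flatten

/-- `G k a d n r` is the word `G_{n,r}`: `s_n` with its prefix of length `|D_{n-r}|` removed. -/
def G (k : ℕ) (a : ℕ → α) (d : ℕ → ℕ) (n r : ℕ) : List α :=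
  (s k a d n).drop (D k a d (n - r)).length

/-- `Om k a d n r` is the set `Ω_n^r` of singular `n`-words of the `r`-th kind. -/
def Om (k : ℕ) (a : ℕ → α) (d : ℕ → ℕ) (n r : ℕ) : Set (List α) :=
  { w | w.length = (s k a d n).length ∧
      w <:+:
        ((((G k a d n r).reverse ++ D k a d (n - r) ++ G k a d n r).drop 1).dropLast) }

/-- `w` is a factor of the infinite word `𝐬`. -/
def FactorS (k : ℕ) (a : ℕ → α) (d : ℕ → ℕ) (w : List α) : Prop :=
  ∃ N, w <:+: s k a d N


/-- The full product `s_{n-1}^{d_n} ⋯ s_1^{d_2} s_0^{d_1}`. -/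
def E (k : ℕ) (a : ℕ → α) (d : ℕ → ℕ) (n : ℕ) : List α :=
  ((List.range n).map (fun j => pw (s k a d (n - 1 - j)) (d (n - j)))).flatten

/-- The leading powers `s_{n-1}^{d_n} ⋯ s_{n-k+1}^{d_{n-k+2}}` in the recursion for `s_n`. The words
are indexed through `S`, because `n - 1 - j` may be negative; then the exponent is `d 0`. -/
def head (k : ℕ) (a : ℕ → α) (d : ℕ → ℕ) (n : ℕ) : List α :=
  ((List.range (k - 1)).map
    (fun j => pw (S k a d (n + (k - 1) - 1 - j)) (d (n - j)))).flatten

theorem s_append_D (k : ℕ) (a : ℕ → α) (d : ℕ → ℕ) (n : ℕ) (hd : 1 ≤ d (n + 1)) :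
    s k a d n ++ D k a d n = E k a d (n + 1) := by
  obtain ⟨e, he⟩ : ∃ e, d (n + 1) = e + 1 := ⟨d (n + 1) - 1, by omega⟩
  simp only [D, E, List.range_succ_eq_map, List.map_cons, List.map_map, List.flatten_cons, he, pw,
    Function.comp_def, Nat.add_sub_cancel, Nat.sub_zero, List.append_assoc]
  congr 4
  funext j
  congr 2 <;> omega

theorem s_eq_head_append (k : ℕ) (hk : 2 ≤ k) (a : ℕ → α) (d : ℕ → ℕ) (n : ℕ) :
    s k a d (n + 1) = head k a d (n + 1) ++ S k a d n := by
  have hmax : max k 1 = k := by omega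
  have hlast : n + 1 + (k - 1) - k = n := by omega
  rw [s, S, dif_neg (by omega), head, hmax, hlast]
  congr 3
  funext j
  congr 2
  omega

/-- While `n < k`, the powers in `head` beyond those of `E n` have exponent `d 0 = 0`. -/
theorem head_eq_E (k : ℕ) (a : ℕ → α) (d : ℕ → ℕ) (hd0 : d 0 = 0) (n : ℕ) (hn : n ≤ k - 1) :
    head k a d n = E k a d n := by
  obtain ⟨r, hr⟩ : ∃ r, k - 1 = n + r := ⟨k - 1 - n, by omega⟩
  have htail : ((List.range r).map ((fun j => pw (S k a d (n + (k - 1) - 1 - j)) (d (n - j))) ∘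
      (n + ·))).flatten = [] := by
    simp [hd0, pw]
  rw [head, hr, List.range_add, ← hr, List.map_append, List.flatten_append, List.map_map, htail,
    List.append_nil, E]
  congr 1
  refine List.map_congr_left fun j hj => ?_
  rw [List.mem_range] at hj
  rw [s]
  congr 2
  omega

theorem head_append_E (k : ℕ) (a : ℕ → α) (d : ℕ → ℕ) (n : ℕ) (hn : k - 1 ≤ n) :
    head k a d n ++ E k a d (n - (k - 1)) = E k a d n := by
  obtain ⟨r, rfl⟩ : ∃ r, n = k - 1 + r := ⟨n - (k - 1), by omega⟩
  rw [E, E, head, List.range_add, List.map_append, List.flatten_append, List.map_map,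
    Nat.add_sub_cancel_left]
  congr 2
  · refine List.map_congr_left fun j hj => ?_
    rw [List.mem_range] at hj
    rw [s]
    congr 2
    omega
  · refine List.map_congr_left fun j hj => ?_
    simp only [Function.comp_apply]
    congr 2 <;> omega

theorem stmt2 {α : Type*} (k : ℕ) (hk : 2 ≤ k) (a : ℕ → α)
    (ha : ∀ i j, 1 ≤ i → i ≤ k → 1 ≤ j → j ≤ k → a i = a j → i = j)
    (d : ℕ → ℕ) (hd0 : d 0 = 0) (hd : ∀ i, 1 ≤ i → 1 ≤ d i) :
    (∀ n : ℕ, n ≤ k - 2 →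
        s k a d (n + 1) = s k a d n ++ D k a d n ++ [a (n + 2)]) ∧
    (∀ n : ℕ, k - 1 ≤ n →
        s k a d (n + 1) ++ D k a d (n + 1 - k) = s k a d n ++ D k a d n ∧
        (s k a d (n + 1)).length + (D k a d (n + 1 - k)).length =
          (s k a d n).length + (D k a d n).length) := by
  refine ⟨fun n hn => ?_, fun n hn => ?_⟩
  · rw [s_append_D k a d n (hd _ (by omega)), s_eq_head_append k hk,
      head_eq_E k a d hd0 (n + 1) (by omega), S, dif_pos (by omega), Nat.mod_eq_of_lt (by omega)]
  · have key : s k a d (n + 1) ++ D k a d (n + 1 - k) = s k a d n ++ D k a d n := by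
      have hS : S k a d n = s k a d (n + 1 - k) := by
        rw [s]
        congr 1
        omega
      have hidx : n + 1 - k + 1 = n + 1 - (k - 1) := by omega
      rw [s_append_D k a d n (hd _ (by omega)), s_eq_head_append k hk, hS, List.append_assoc,
        s_append_D k a d (n + 1 - k) (hd _ (by omega)), hidx, head_append_E k a d _ (by omega)]
    exact ⟨key, by simpa using congrArg List.length key⟩

end Epi
end

section
/- Let 1 ≤ r ≤ k-1, n ≥ r, and 1 ≤ i ≤ k. Then: (i) if n ≡ i+r-1 (mod k), the first letter of G_{n,r} is a_i; (ii) if n ≡ i-1 (mod k), the last letter of G_{n,r} is a_i. -/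
/-!
Write `x_q = a (q % k + 1)`. Since `s_n` ends with `s_{n-k}`, induction in steps of `k` shows that
`x_n` is the last letter of `s_n` (`getLast?_s`). The whole statement then follows once
`D_q x_q` is known to be a prefix of `s_{q+1}` (`D_append_prefix_s`), because `s_{q+1}` is a prefix of
`s_{q+r}` for every `r ≥ 1` (`s_prefix_of_le`): with `q = n - r` this makes `G_{n,r}` a nonempty suffix of
`s_n` starting with `x_{n-r}`.

The prefix claim is proved by strong induction on `q`. After cancelling `s_q^{d_{q+1}-1}` one has to
find `s_{q-1}^{d_q} ⋯ s_0^{d_1} x_q` at the beginning of `s_q s_{q-1} ⋯`. For `q < k` it is `s_q`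
itself. For `q ≥ k`, cancelling the common part `s_{q-1}^{d_q} ⋯ s_{q-k+1}^{d_{q-k+2}} s_{q-k}`
leaves the claim that `D_{q-k} x_{q-k}` is a prefix of `s_{q-1}`. By induction it is a prefix of
`s_{q-k+1}`, and `q - k + 1 ≤ q - 1` because `k ≥ 2`.
-/

namespace Epi

variable {α : Type*}

/-- The block `s_{m-1}^{d_m} s_{m-2}^{d_{m-1}} ⋯` with `c` factors. It is meant for `c ≤ m`; for
larger `c` the truncated indices give extra factors `s_0^{d_0}`. -/
def block (k : ℕ) (a : ℕ → α) (d : ℕ → ℕ) (m c : ℕ) : List α :=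
  ((List.range c).map (fun j => pw (s k a d (m - 1 - j)) (d (m - j)))).flatten

theorem block_add (k : ℕ) (a : ℕ → α) (d : ℕ → ℕ) (m c e : ℕ) :
    block k a d m (c + e) = block k a d m c ++ block k a d (m - c) e := by
  unfold block
  rw [List.range_add, List.map_append, List.flatten_append, List.map_map]
  congr 3
  funext j
  simp only [Function.comp]
  congr 2 <;> omega

theorem block_succ (k : ℕ) (a : ℕ → α) (d : ℕ → ℕ) (m c : ℕ) :
    block k a d (m + 1) (c + 1) = pw (s k a d m) (d (m + 1)) ++ block k a d m c := by
  rw [Nat.add_comm c 1, block_add]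
  simp [block]

theorem s_zero (k : ℕ) (hk : 2 ≤ k) (a : ℕ → α) (d : ℕ → ℕ) : s k a d 0 = [a 1] := by
  unfold s
  rw [S, dif_pos (by omega)]
  have : k - 1 + 1 = k := by omega
  simp [this]

theorem s_of_ge (k : ℕ) (hk : 2 ≤ k) (a : ℕ → α) (d : ℕ → ℕ) (q : ℕ) (hq : k ≤ q) :
    s k a d q = block k a d q (k - 1) ++ s k a d (q - k) := by
  conv_lhs => unfold s
  rw [S, dif_neg (by omega)]
  unfold block s
  congr 1
  · congr 1
    apply List.map_congr_left
    intro j hj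
    rw [List.mem_range] at hj
    congr 2 <;> omega
  · congr 1
    omega

/-- The initial recurrence. The definition of `S` always uses `k - 1` powers; those of nonpositive
index have exponent `d 0 = 0` and disappear. -/
theorem s_of_lt (k : ℕ) (hk : 2 ≤ k) (a : ℕ → α) (d : ℕ → ℕ) (hd0 : d 0 = 0) (q : ℕ)
    (hq : q < k) : s k a d q = block k a d q q ++ [a (q % k + 1)] := by
  rcases Nat.eq_zero_or_pos q with rfl | hpos
  · simp [s_zero k hk, block]
  conv_lhs => unfold s
  rw [S, dif_neg (by omega)]
  congr 1
  · have hsplit : k - 1 = q + (k - 1 - q) := by omega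
    rw [show List.range (k - 1) = List.range (q + (k - 1 - q)) by rw [← hsplit], List.range_add,
      List.map_append, List.flatten_append, List.map_map]
    have hz : (List.map ((fun j => pw (S k a d (q + (k - 1) - 1 - j))
        (d (q + (k - 1) + 1 - k - j))) ∘ fun x => q + x) (List.range (k - 1 - q))).flatten
        = [] := by
      rw [List.flatten_eq_nil_iff]
      intro l hl
      rw [List.mem_map] at hl
      obtain ⟨j, -, rfl⟩ := hl
      have : q + (k - 1) + 1 - k - (q + j) = 0 := by omega
      simp [this, hd0, pw]
    rw [hz, List.append_nil]
    unfold block s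
    congr 1
    apply List.map_congr_left
    intro j hj
    rw [List.mem_range] at hj
    congr 2 <;> omega
  · rw [S, dif_pos (by omega)]
    congr 4
    omega

theorem getLast?_s (k : ℕ) (hk : 2 ≤ k) (a : ℕ → α) (d : ℕ → ℕ) (hd0 : d 0 = 0) (q : ℕ) :
    (s k a d q).getLast? = some (a (q % k + 1)) := by
  induction q using Nat.strong_induction_on with
  | _ q ih =>
    rcases Nat.lt_or_ge q k with h | h
    · rw [s_of_lt k hk a d hd0 q h]
      simp
    · rw [s_of_ge k hk a d q h, List.getLast?_append, ih (q - k) (by omega),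
        ← Nat.mod_eq_sub_mod h]
      rfl

theorem pw_succ_pred (w : List α) (p : ℕ) (hp : 1 ≤ p) : pw w p = pw w (p - 1) ++ w := by
  obtain ⟨p, rfl⟩ := Nat.exists_eq_add_of_le' hp
  rw [Nat.add_sub_cancel]
  induction p with
  | zero => simp [pw]
  | succ p ih =>
    conv_lhs => rw [pw, ih (by omega)]
    rw [← List.append_assoc]
    rfl

theorem prefix_pw (w : List α) (p : ℕ) (hp : 1 ≤ p) : w <+: pw w p := by
  obtain ⟨p, rfl⟩ := Nat.exists_eq_add_of_le' hp
  exact List.prefix_append _ _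

theorem prefix_block (k : ℕ) (a : ℕ → α) (d : ℕ → ℕ) (hd : ∀ i, 1 ≤ i → 1 ≤ d i) (m c : ℕ) :
    s k a d m <+: block k a d (m + 1) (c + 1) := by
  rw [block_succ]
  exact (prefix_pw _ _ (hd _ (by omega))).trans (List.prefix_append _ _)

theorem s_prefix_succ (k : ℕ) (hk : 2 ≤ k) (a : ℕ → α) (d : ℕ → ℕ) (hd0 : d 0 = 0)
    (hd : ∀ i, 1 ≤ i → 1 ≤ d i) (q : ℕ) : s k a d q <+: s k a d (q + 1) := by
  rcases Nat.lt_or_ge (q + 1) k with h | h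
  · rw [s_of_lt k hk a d hd0 (q + 1) h]
    exact (prefix_block k a d hd q q).trans (List.prefix_append _ _)
  · rw [s_of_ge k hk a d (q + 1) h]
    obtain ⟨c, rfl⟩ := Nat.exists_eq_add_of_le' hk
    exact (prefix_block _ a d hd q c).trans (List.prefix_append _ _)

theorem s_prefix_of_le (k : ℕ) (hk : 2 ≤ k) (a : ℕ → α) (d : ℕ → ℕ) (hd0 : d 0 = 0)
    (hd : ∀ i, 1 ≤ i → 1 ≤ d i) (q n : ℕ) (h : q ≤ n) : s k a d q <+: s k a d n := by
  induction n, h using Nat.le_induction with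
  | base => exact List.prefix_rfl
  | succ n _ ih => exact ih.trans (s_prefix_succ k hk a d hd0 hd n)

/-- `s_{q+1}` starts with `s_q^{d_{q+1}}`, and with `s_q^{d_{q+1}} s_{q-1}` as soon as `q ≥ 1`. -/
theorem exists_s_succ_eq (k : ℕ) (hk : 2 ≤ k) (a : ℕ → α) (d : ℕ → ℕ) (hd0 : d 0 = 0)
    (hd : ∀ i, 1 ≤ i → 1 ≤ d i) (q : ℕ) :
    ∃ t, s k a d (q + 1) = pw (s k a d q) (d (q + 1)) ++ t ∧
      (1 ≤ q → s k a d (q - 1) <+: t) := by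
  rcases Nat.lt_or_ge (q + 1) k with h | h
  · refine ⟨block k a d q q ++ [a ((q + 1) % k + 1)], ?_, fun hq => ?_⟩
    · rw [s_of_lt k hk a d hd0 (q + 1) h, block_succ, List.append_assoc]
    · obtain ⟨q, rfl⟩ := Nat.exists_eq_add_of_le' hq
      exact (prefix_block k a d hd q q).trans (List.prefix_append _ _)
  · obtain ⟨c, rfl⟩ := Nat.exists_eq_add_of_le' hk
    refine ⟨block (c + 2) a d q c ++ s (c + 2) a d (q + 1 - (c + 2)), ?_, fun hq => ?_⟩
    · rw [s_of_ge (c + 2) hk a d (q + 1) h, ← List.append_assoc, ← block_succ]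
      rfl
    · obtain ⟨q, rfl⟩ := Nat.exists_eq_add_of_le' hq
      -- For `k = 2` the factor after `s_q^{d_{q+1}}` is the final one `s_{q+1-k} = s_{q-1}`;
      -- otherwise it belongs to the block.
      rcases c with _ | c
      · simp [block]
      · exact (prefix_block _ a d hd q c).trans (List.prefix_append _ _)

/-- In `s_{q+1}`, the prefix `D_q` is followed by the last letter of `s_q`. -/
theorem D_append_prefix_s (k : ℕ) (hk : 2 ≤ k) (a : ℕ → α) (d : ℕ → ℕ) (hd0 : d 0 = 0)
    (hd : ∀ i, 1 ≤ i → 1 ≤ d i) (q : ℕ) :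
    D k a d q ++ [a (q % k + 1)] <+: s k a d (q + 1) := by
  induction q using Nat.strong_induction_on with
  | _ q ih =>
    obtain ⟨t, ht, hpre⟩ := exists_s_succ_eq k hk a d hd0 hd q
    have hD : D k a d q = pw (s k a d q) (d (q + 1) - 1) ++ block k a d q q := rfl
    rw [ht, hD, pw_succ_pred _ _ (hd (q + 1) (by omega)), List.append_assoc, List.append_assoc,
      List.prefix_append_right_inj]
    rcases Nat.lt_or_ge q k with h | h
    · rw [← s_of_lt k hk a d hd0 q h]
      exact List.prefix_append _ _
    · have hb : block k a d q q =
          block k a d q (k - 1) ++ (s k a d (q - k) ++ D k a d (q - k)) := by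
        have h1 : q = (k - 1) + (q - k + 1) := by omega
        have h2 : q - (k - 1) = q - k + 1 := by omega
        have h3 : block k a d q q = block k a d q ((k - 1) + (q - k + 1)) := by rw [← h1]
        have hp : pw (s k a d (q - k)) (d (q - k + 1)) =
            s k a d (q - k) ++ pw (s k a d (q - k)) (d (q - k + 1) - 1) := by
          have h4 := hd (q - k + 1) (by omega)
          conv_lhs => rw [show d (q - k + 1) = (d (q - k + 1) - 1) + 1 by omega]
          rfl
        rw [h3, block_add, h2, block_succ, hp, List.append_assoc]
        rfl
      rw [hb, s_of_ge k hk a d q h, List.append_assoc, List.append_assoc, List.append_assoc,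
        List.prefix_append_right_inj, List.prefix_append_right_inj, Nat.mod_eq_sub_mod h]
      exact ((ih (q - k) (by omega)).trans
        (s_prefix_of_le k hk a d hd0 hd _ _ (by omega))).trans (hpre (by omega))

theorem stmt8 {α : Type*} (k : ℕ) (hk : 2 ≤ k) (a : ℕ → α)
    (ha : ∀ i j, 1 ≤ i → i ≤ k → 1 ≤ j → j ≤ k → a i = a j → i = j)
    (d : ℕ → ℕ) (hd0 : d 0 = 0) (hd : ∀ i, 1 ≤ i → 1 ≤ d i)
    (r n i : ℕ) (hr1 : 1 ≤ r) (hrk : r ≤ k - 1) (hrn : r ≤ n)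
    (hi1 : 1 ≤ i) (hik : i ≤ k) :
    (n % k = (i + r - 1) % k → (G k a d n r).head? = some (a i)) ∧
    (n % k = (i - 1) % k → (G k a d n r).getLast? = some (a i)) := by
  have hpre : D k a d (n - r) ++ [a ((n - r) % k + 1)] <+: s k a d n :=
    (D_append_prefix_s k hk a d hd0 hd (n - r)).trans
      (s_prefix_of_le k hk a d hd0 hd _ _ (by omega))
  obtain ⟨t, ht⟩ := hpre
  have hG : G k a d n r = a ((n - r) % k + 1) :: t := by
    unfold G
    rw [← ht, List.append_assoc, List.drop_left]
    rfl
  have hi : (i - 1) % k + 1 = i := by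
    rw [Nat.mod_eq_of_lt (by omega)]
    omega
  refine ⟨fun h => ?_, fun h => ?_⟩
  · have hm : (n - r) % k = (i - 1) % k := by
      have h' : n - r + r ≡ i - 1 + r [MOD k] := by
        rw [show n - r + r = n by omega, show i - 1 + r = i + r - 1 by omega]
        exact h
      exact Nat.ModEq.add_right_cancel' r h'
    rw [hG, hm, hi]
    rfl
  · have hlast := getLast?_s k hk a d hd0 n
    rw [← ht, List.append_assoc, List.singleton_append, ← hG, List.getLast?_append, h, hi]
      at hlast
    rw [hG] at hlast ⊢
    simpa [List.getLast?_cons] using hlast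

end Epi
end
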